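/- Let H be an algebraic subgroup of G_m^n. Then there exists a free lattice L = Σ_{j=1}^r ℤ(a_{1j},...,a_{nj}) ⊆ ℤ^n such that H is defined by the equations x_1^{a_{1j}}···x_n^{a_{nj}} = 1 for j = 1,...,r, and H is connected if and only if L is primitive. -/

import Mathlib

noncomputable section

abbrev Qbar : Type := AlgebraicClosure ℚ

/-- The absolute logarithmic Weil height of an algebraic number, via the
Mahler-measure formula applied to its (integer-scaled) minimal polynomial. -/
noncomputable def weilHeight (α : Qbar) : ℝ :=
  (Real.log (((minpoly ℚ α).support.lcm fun i => ((minpoly ℚ α).coeff i).den : ℕ) : ℝ) +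
      (((minpoly ℚ α).aroots ℂ).map fun z => Real.log (max 1 ‖z‖)).sum) /
    ((minpoly ℚ α).natDegree : ℝ)

/-- Points of the torus `G_m^n` over the algebraic numbers. -/
abbrev TorusPt (n : ℕ) : Type := Fin n → Qbarˣ

/-- Zariski-closed subsets of the torus: zero sets of families of polynomials. -/
def ZClosed {n : ℕ} (S : Set (TorusPt n)) : Prop :=
  ∃ I : Set (MvPolynomial (Fin n) Qbar),
    S = {x : TorusPt n | ∀ f ∈ I, MvPolynomial.eval (fun i => (x i : Qbar)) f = 0}

/-- Irreducibility (of a subset of the torus) for the Zariski topology. -/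
def ZIrred {n : ℕ} (S : Set (TorusPt n)) : Prop :=
  S.Nonempty ∧ ∀ Z₁ Z₂ : Set (TorusPt n), ZClosed Z₁ → ZClosed Z₂ →
    S ⊆ Z₁ ∪ Z₂ → S ⊆ Z₁ ∨ S ⊆ Z₂

/-- Dimension via lengths of chains of irreducible closed subsets. -/
def zdim {n : ℕ} (S : Set (TorusPt n)) : ℕ :=
  sSup {d : ℕ | ∃ Z : Fin (d + 1) → Set (TorusPt n),
    (∀ i, ZClosed (Z i) ∧ ZIrred (Z i) ∧ Z i ⊆ S) ∧
    ∀ i j : Fin (d + 1), i < j → Z i ⊂ Z j}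

/-- An algebraic subgroup of the torus: a Zariski-closed subgroup. -/
def IsAlgSubgroup {n : ℕ} (H : Set (TorusPt n)) : Prop :=
  ZClosed H ∧ (1 : TorusPt n) ∈ H ∧ (∀ x ∈ H, ∀ y ∈ H, x * y ∈ H) ∧ ∀ x ∈ H, x⁻¹ ∈ H

/-- A coset: a translate of an algebraic subgroup. -/
def IsCoset {n : ℕ} (C : Set (TorusPt n)) : Prop :=
  ∃ (g : TorusPt n) (H : Set (TorusPt n)), IsAlgSubgroup H ∧ C = (g * ·) '' H

/-- Zariski connectedness of a subset of the torus. -/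
def ZConnected {n : ℕ} (H : Set (TorusPt n)) : Prop :=
  ∀ Z₁ Z₂ : Set (TorusPt n), ZClosed Z₁ → ZClosed Z₂ → H ⊆ Z₁ ∪ Z₂ →
    H ∩ Z₁ ∩ Z₂ = ∅ → H ⊆ Z₁ ∨ H ⊆ Z₂

/-- `Y` is an `s`-anomalous subvariety of `X`. -/
def IsAnomalous {n : ℕ} (X Y : Set (TorusPt n)) (s : ℕ) : Prop :=
  Y ⊆ X ∧ ZClosed Y ∧ ZIrred Y ∧ 1 ≤ zdim Y ∧
    ∃ H : Set (TorusPt n), IsCoset H ∧ Y ⊆ H ∧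
      (s : ℤ) + (zdim H : ℤ) - (n : ℤ) < (zdim Y : ℤ)

/-- `X^{oa,s}` : the complement in `X` of the union of all `s`-anomalous subvarieties. -/
def openAnom {n : ℕ} (X : Set (TorusPt n)) (s : ℕ) : Set (TorusPt n) :=
  X \ ⋃ (Y : Set (TorusPt n)) (_ : IsAnomalous X Y s), Y

/-- `X` is defined over (the subfield) `K`: cut out by polynomials with coefficients in `K`. -/
def DefinedOver {n : ℕ} (K : IntermediateField ℚ Qbar) (X : Set (TorusPt n)) : Prop :=
  ∃ I : Set (MvPolynomial (Fin n) Qbar),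
    (∀ f ∈ I, ∀ m, MvPolynomial.coeff m f ∈ K) ∧
    X = {x : TorusPt n | ∀ f ∈ I, MvPolynomial.eval (fun i => (x i : Qbar)) f = 0}

def IsRootOfUnity (α : Qbar) : Prop := ∃ k : ℕ, 1 ≤ k ∧ α ^ k = 1

/-- The Bogomolov property for a subfield of the algebraic numbers. -/
def HasBogomolov (L : IntermediateField ℚ Qbar) : Prop :=
  ∃ C : ℝ, 0 < C ∧ ∀ α : Qbar, α ∈ L → α ≠ 0 → ¬ IsRootOfUnity α → C ≤ weilHeight α


/-- The lattice `L` is primitive (saturated) in `ℤⁿ`: `ℚL ∩ ℤⁿ = L`. -/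
def LatSat {n : ℕ} (L : Submodule ℤ (Fin n → ℤ)) : Prop :=
  ∀ (v : Fin n → ℤ) (k : ℤ), k ≠ 0 → k • v ∈ L → v ∈ L

/-!
A polynomial restricts to the subgroup cut out by a lattice `L` of characters as an element of the
group algebra of `ℤ ^ ι ⧸ L`. If `L` consists of all the characters trivial on a submonoid `H` of
the torus, distinct elements of `ℤ ^ ι ⧸ L` restrict to distinct characters of `H`, which are
linearly independent by Dedekind, so a polynomial vanishes on `H` if and only if its image in the
group algebra is zero. Such a polynomial then vanishes wherever all of `L` is trivial, so a
Zariski-closed `H` is the subgroup cut out by `L`.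

If `ℤ ^ ι ⧸ L` is torsion-free, its group algebra is a domain, so `H` is irreducible. Conversely, a
character with a nonzero multiple in `L` takes only finitely many values on `H`, all of them roots
of unity, and its fibres are closed; it is therefore constant on `H` when `H` is connected.
-/

section Submodule

variable {R M : Type*} [AddCommGroup M]

lemma exists_linearIndependent_span_range_eq [Ring R] [StrongRankCondition R] [Module R M]
    (L : Submodule R M) [Module.Free R L] [Module.Finite R L] :
    ∃ (r : ℕ) (a : Fin r → M), LinearIndependent R a ∧ Submodule.span R (Set.range a) = L := by
  let b := Module.finBasis R L
  exact ⟨_, fun j => b j, b.linearIndependent.map' L.subtype L.ker_subtype,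
    (Submodule.span_range_subtype_eq_top_iff L fun j => (b j).2).mp b.span_eq⟩

lemma isTorsionFree_quotient_iff [CommRing R] [IsDomain R] [Module R M] {L : Submodule R M} :
    Module.IsTorsionFree R (M ⧸ L) ↔ ∀ (k : R) (v : M), k ≠ 0 → k • v ∈ L → v ∈ L := by
  simp_rw [Module.isTorsionFree_iff_smul_eq_zero, L.mkQ_surjective.forall, Submodule.mkQ_apply,
    ← Submodule.Quotient.mk_smul, Submodule.Quotient.mk_eq_zero]
  exact forall₂_congr fun _ _ => by tauto

end Submodule

section GroupAlgebra

variable {R M A : Type*} [CommRing R] [IsDomain R] [MulOneClass M] [AddMonoid A]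

lemma eq_zero_of_forall_lift_flip_eq_zero {φ : Multiplicative A →* M →* R}
    (hφ : Function.Injective φ) {F : AddMonoidAlgebra R A}
    (hF : ∀ m, AddMonoidAlgebra.lift R R A (φ.flip m) F = 0) : F = 0 := by
  have hind : LinearIndependent R fun a : A => ⇑(φ (.ofAdd a)) :=
    (linearIndependent_monoidHom M R).comp _ (hφ.comp Multiplicative.ofAdd.injective)
  refine AddMonoidAlgebra.coeff_injective (linearIndependent_iff.mp hind _ (funext fun m => ?_))
  simpa [Finsupp.linearCombination_apply, Finsupp.sum_apply', AddMonoidAlgebra.lift_apply]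
    using hF m

end GroupAlgebra

section Duality

variable {ι G : Type*} [Fintype ι] [CommGroup G]

/-- The character `x ↦ x ^ v = ∏ i, x i ^ v i` of the torus `G ^ ι`, as a homomorphism in both
`v` and `x`; the lattice `ℤ ^ ι` of exponents is written multiplicatively. -/
def torusCharacter : Multiplicative (ι → ℤ) →* (ι → G) →* G where
  toFun v :=
    { toFun x := ∏ i, x i ^ v.toAdd i
      map_one' := by simp
      map_mul' x y := by simp [mul_zpow, Finset.prod_mul_distrib] }
  map_one' := by ext; simp
  map_mul' v w := by ext; simp [zpow_add, Finset.prod_mul_distrib]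

lemma torusCharacter_apply (v : ι → ℤ) (x : ι → G) :
    torusCharacter (.ofAdd v) x = ∏ i, x i ^ v i := rfl

lemma torusCharacter_single [DecidableEq ι] (i : ι) (x : ι → G) :
    torusCharacter (.ofAdd (Pi.single i 1)) x = x i := by
  rw [torusCharacter_apply, Finset.prod_eq_single i] <;> simp +contextual

lemma torusCharacter_zsmul (k : ℤ) (v : ι → ℤ) (x : ι → G) :
    torusCharacter (.ofAdd (k • v)) x = torusCharacter (.ofAdd v) x ^ k := by
  rw [ofAdd_zsmul, map_zpow, MonoidHom.zpow_apply]

lemma torusCharacter_eq_div (v : ι → ℤ) (x : ι → G) :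
    torusCharacter (.ofAdd v) x = (∏ i, x i ^ (v i).toNat) / ∏ i, x i ^ (-v i).toNat := by
  rw [torusCharacter_apply, ← Finset.prod_div_distrib]
  refine Finset.prod_congr rfl fun i _ => ?_
  rw [← zpow_natCast, ← zpow_natCast, div_eq_mul_inv, ← zpow_sub, Int.toNat_sub_toNat_neg]

/-- The lattice of exponents of the characters of the torus `G ^ ι` that are trivial on `H`. -/
def characterLattice (H : Set (ι → G)) : Submodule ℤ (ι → ℤ) where
  carrier := {v | ∀ x ∈ H, torusCharacter (.ofAdd v) x = 1}
  zero_mem' x _ := by rw [ofAdd_zero, map_one, MonoidHom.one_apply]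
  add_mem' {v w} hv hw x hx := by
    rw [ofAdd_add, map_mul, MonoidHom.mul_apply, hv x hx, hw x hx, one_mul]
  smul_mem' k v hv x hx := by rw [torusCharacter_zsmul, hv x hx, one_zpow]

/-- The subgroup of the torus `G ^ ι` cut out by the characters with exponent in `L`. -/
def subtorus (L : Submodule ℤ (ι → ℤ)) : Subgroup (ι → G) :=
  ⨅ v ∈ L, (torusCharacter (.ofAdd v)).ker

lemma mem_subtorus {L : Submodule ℤ (ι → ℤ)} {x : ι → G} :
    x ∈ subtorus L ↔ ∀ v ∈ L, torusCharacter (.ofAdd v) x = 1 := by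
  simp [subtorus, Subgroup.mem_iInf, MonoidHom.mem_ker]

lemma subset_subtorus_characterLattice (H : Set (ι → G)) :
    H ⊆ subtorus (G := G) (characterLattice H) :=
  fun x hx => mem_subtorus.mpr fun _ hv => hv x hx

lemma mem_subtorus_span {s : Set (ι → ℤ)} {x : ι → G} :
    x ∈ subtorus (Submodule.span ℤ s) ↔ ∀ v ∈ s, torusCharacter (.ofAdd v) x = 1 := by
  refine mem_subtorus.trans ⟨fun hx v hv => hx v (Submodule.subset_span hv), fun hx v hv => ?_⟩
  have hle : Submodule.span ℤ s ≤ characterLattice {x} :=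
    Submodule.span_le.mpr fun w hw y hy => by rw [hy, hx w hw]
  exact hle hv x rfl

lemma le_characterLattice_subtorus (L : Submodule ℤ (ι → ℤ)) :
    L ≤ characterLattice (subtorus (G := G) L : Set (ι → G)) :=
  fun _ hv _ hx => mem_subtorus.mp hx _ hv

/-- The characters of the torus restricted to a submonoid `H`: when they are all trivial on `H` for
exponents in `L`, they only depend on the exponent modulo `L`. -/
def restrictedCharacter {L : Submodule ℤ (ι → ℤ)} {H : Submonoid (ι → G)}
    (hLH : L ≤ characterLattice (H : Set (ι → G))) :
    Multiplicative ((ι → ℤ) ⧸ L) →* H →* G :=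
  AddMonoidHom.toMultiplicativeLeft <| QuotientAddGroup.lift L.toAddSubgroup
    (MonoidHom.toAdditiveRight ((MonoidHom.compHom' H.subtype).comp torusCharacter))
    fun _ hv => MonoidHom.ext fun x => hLH hv x x.2

lemma restrictedCharacter_mk {L : Submodule ℤ (ι → ℤ)} {H : Submonoid (ι → G)}
    (hLH : L ≤ characterLattice (H : Set (ι → G))) (v : ι → ℤ) (x : H) :
    restrictedCharacter hLH (.ofAdd (Submodule.Quotient.mk v)) x = torusCharacter (.ofAdd v) x.1 :=
  rfl

lemma restrictedCharacter_injective (H : Submonoid (ι → G)) :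
    Function.Injective (restrictedCharacter (le_refl (characterLattice (H : Set (ι → G))))) := by
  refine (injective_iff_map_eq_one _).mpr fun q hq => ?_
  induction q using Multiplicative.rec with | _ q
  induction q using Submodule.Quotient.induction_on with | _ v
  refine congrArg Multiplicative.ofAdd ((Submodule.Quotient.mk_eq_zero _).mpr fun x hx => ?_)
  exact DFunLike.congr_fun hq (⟨x, hx⟩ : H)

end Duality

section CoordinateRing

variable {ι R : Type*} [Fintype ι] [DecidableEq ι] [CommRing R]

/-- The restriction of polynomial functions to `subtorus L`, with values in its coordinate ring,
the group algebra of the character group `ℤ ^ ι ⧸ L`. -/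
def restrictToSubtorus (L : Submodule ℤ (ι → ℤ)) :
    MvPolynomial ι R →ₐ[R] AddMonoidAlgebra R ((ι → ℤ) ⧸ L) :=
  MvPolynomial.aeval fun i => .single (Submodule.Quotient.mk (Pi.single i 1)) 1

lemma lift_restrictToSubtorus {L : Submodule ℤ (ι → ℤ)} {H : Submonoid (ι → Rˣ)}
    (hLH : L ≤ characterLattice (H : Set (ι → Rˣ))) (x : H) (f : MvPolynomial ι R) :
    AddMonoidAlgebra.lift R R _ ((Units.coeHom R).comp ((restrictedCharacter hLH).flip x))
      (restrictToSubtorus L f) = MvPolynomial.eval (fun i => (x.1 i : R)) f := by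
  simp [restrictToSubtorus, MvPolynomial.comp_aeval_apply, restrictedCharacter_mk,
    torusCharacter_single, MvPolynomial.aeval_eq_eval]

end CoordinateRing

section Zariski

variable {ι R : Type*} [CommRing R] [IsDomain R]

/-- The Zariski topology on the points of the torus `G_m ^ ι` over a domain `R`. It is pulled back
from `Spec R[X]` along the map sending a point to the kernel of evaluation at it. -/
abbrev torusZariskiTopology : TopologicalSpace (ι → Rˣ) :=
  .induced (fun x => PrimeSpectrum.comap (MvPolynomial.eval fun i => (x i : R)) ⊥) inferInstance

attribute [local instance] torusZariskiTopology

lemma isClosed_iff_exists_eq_zeroLocus {S : Set (ι → Rˣ)} :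
    IsClosed S ↔ ∃ I : Set (MvPolynomial ι R),
      S = {x | ∀ f ∈ I, MvPolynomial.eval (fun i => (x i : R)) f = 0} := by
  have hpre (I : Set (MvPolynomial ι R)) :
      (fun x : ι → Rˣ => PrimeSpectrum.comap (MvPolynomial.eval fun i => (x i : R)) ⊥) ⁻¹'
        PrimeSpectrum.zeroLocus I =
      {x | ∀ f ∈ I, MvPolynomial.eval (fun i => (x i : R)) f = 0} := by
    ext x
    simp [PrimeSpectrum.mem_zeroLocus, Set.subset_def]
  simp_rw [isClosed_induced_iff, PrimeSpectrum.isClosed_iff_zeroLocus]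
  constructor
  · rintro ⟨_, ⟨I, rfl⟩, rfl⟩
    exact ⟨I, hpre I⟩
  · rintro ⟨I, rfl⟩
    exact ⟨_, ⟨I, rfl⟩, hpre I⟩

variable [Fintype ι]

lemma continuous_torusCharacter_cofinite (v : ι → ℤ) :
    Continuous fun x : ι → Rˣ => CofiniteTopology.of (torusCharacter (.ofAdd v) x) := by
  have hfibre (c : Rˣ) : IsClosed {x : ι → Rˣ | torusCharacter (.ofAdd v) x = c} := by
    refine isClosed_iff_exists_eq_zeroLocus.mpr
      ⟨{∏ i, .X i ^ (v i).toNat - .C (c : R) * ∏ i, .X i ^ (-v i).toNat}, Set.ext fun x => ?_⟩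
    simp [torusCharacter_eq_div, div_eq_iff_eq_mul, sub_eq_zero, Units.ext_iff]
  refine continuous_iff_isClosed.mpr fun S hS => ?_
  rcases CofiniteTopology.isClosed_iff.mp hS with rfl | hfin
  · exact isClosed_univ
  · have hunion := hfin.isClosed_biUnion fun c _ => hfibre (CofiniteTopology.of.symm c)
    convert hunion
    ext x
    simp [Equiv.eq_symm_apply]

lemma image_torusCharacter_subsingleton_of_finite {H : Set (ι → Rˣ)} (hconn : IsPreconnected H)
    {v : ι → ℤ} (hfin : (torusCharacter (.ofAdd v) '' H).Finite) :
    (torusCharacter (.ofAdd v) '' H).Subsingleton := by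
  have himage := hconn.image _ (continuous_torusCharacter_cofinite v).continuousOn
  rw [← Set.image_image] at himage
  refine CofiniteTopology.of.injective.subsingleton_image_iff.mp (Set.not_nontrivial_iff.mp ?_)
  exact fun hnontriv => himage.infinite_of_nontrivial hnontriv (hfin.image _)

lemma mem_characterLattice_of_zsmul_mem {H : Set (ι → Rˣ)} (hconn : IsPreconnected H)
    (h_one : 1 ∈ H) {k : ℤ} (hk : k ≠ 0) {v : ι → ℤ} (hkv : k • v ∈ characterLattice H) :
    v ∈ characterLattice H := by
  have : NeZero k.natAbs := ⟨Int.natAbs_ne_zero.mpr hk⟩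
  have hroots : torusCharacter (.ofAdd v) '' H ⊆ rootsOfUnity k.natAbs R := by
    rintro _ ⟨x, hx, rfl⟩
    rw [SetLike.mem_coe, mem_rootsOfUnity, pow_natAbs_eq_one, ← torusCharacter_zsmul]
    exact hkv x hx
  have hfin : (rootsOfUnity k.natAbs R : Set Rˣ).Finite :=
    Set.finite_coe_iff.mp (inferInstanceAs (Finite (rootsOfUnity k.natAbs R)))
  intro x hx
  rw [← map_one (torusCharacter (.ofAdd v))]
  exact image_torusCharacter_subsingleton_of_finite hconn (hfin.subset hroots)
    (Set.mem_image_of_mem _ hx) (Set.mem_image_of_mem _ h_one)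

lemma restrictToSubtorus_eq_zero_iff [DecidableEq ι] {H : Submonoid (ι → Rˣ)}
    {f : MvPolynomial ι R} :
    restrictToSubtorus (characterLattice (H : Set (ι → Rˣ))) f = 0 ↔
      ∀ x ∈ H, MvPolynomial.eval (fun i => (x i : R)) f = 0 := by
  refine ⟨fun hf x hx => ?_, fun hf => ?_⟩
  · rw [← lift_restrictToSubtorus le_rfl ⟨x, hx⟩, hf, map_zero]
  · have hinj : Function.Injective (MonoidHom.compHom (M := H) (Units.coeHom R)) := fun χ ψ h =>
      MonoidHom.ext fun x => Units.ext (DFunLike.congr_fun h x)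
    refine eq_zero_of_forall_lift_flip_eq_zero
      (φ := (MonoidHom.compHom (Units.coeHom R)).comp (restrictedCharacter le_rfl))
      (hinj.comp (restrictedCharacter_injective H)) fun x => ?_
    exact (lift_restrictToSubtorus le_rfl x f).trans (hf x x.2)

theorem subtorus_characterLattice {H : Submonoid (ι → Rˣ)} (hH : IsClosed (H : Set (ι → Rˣ))) :
    (subtorus (characterLattice (H : Set (ι → Rˣ)))).toSubmonoid = H := by
  classical
  refine le_antisymm (fun x hx => ?_) (subset_subtorus_characterLattice _)
  obtain ⟨I, hI⟩ := isClosed_iff_exists_eq_zeroLocus.mp hH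
  rw [← SetLike.mem_coe, hI]
  intro f hf
  have hzero : restrictToSubtorus (characterLattice (H : Set (ι → Rˣ))) f = 0 :=
    restrictToSubtorus_eq_zero_iff.mpr fun y hy => hI.subset hy f hf
  rw [← lift_restrictToSubtorus (le_characterLattice_subtorus _) ⟨x, hx⟩, hzero, map_zero]

theorem isPreirreducible_of_isTorsionFree_quotient {H : Submonoid (ι → Rˣ)}
    (htf : Module.IsTorsionFree ℤ ((ι → ℤ) ⧸ characterLattice (H : Set (ι → Rˣ)))) :
    IsPreirreducible (H : Set (ι → Rˣ)) := by
  classical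
  have := Module.isTorsionFree_int_iff_isAddTorsionFree.mp htf
  have : AddMonoid.FG ((ι → ℤ) ⧸ characterLattice (H : Set (ι → Rˣ))) :=
    AddGroup.fg_iff_addMonoid_fg.mp (Module.Finite.iff_addGroup_fg.mp inferInstance)
  refine isPreirreducible_iff_isClosed_union_isClosed.mpr fun Z₁ Z₂ hZ₁ hZ₂ hcover => ?_
  obtain ⟨I₁, rfl⟩ := isClosed_iff_exists_eq_zeroLocus.mp hZ₁
  obtain ⟨I₂, rfl⟩ := isClosed_iff_exists_eq_zeroLocus.mp hZ₂
  refine or_iff_not_imp_left.mpr fun hZ₁ y hy g hg => ?_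
  obtain ⟨x, hx, hxZ₁⟩ := Set.not_subset.mp hZ₁
  obtain ⟨f, hf, hfx⟩ : ∃ f ∈ I₁, MvPolynomial.eval (fun i => (x i : R)) f ≠ 0 := by
    simpa using hxZ₁
  have hfg : restrictToSubtorus (characterLattice (H : Set (ι → Rˣ))) (f * g) = 0 :=
    restrictToSubtorus_eq_zero_iff.mpr fun z hz => by
      rw [map_mul, mul_eq_zero]
      exact (hcover hz).imp (fun hz₁ => hz₁ f hf) fun hz₂ => hz₂ g hg
  rw [map_mul, mul_eq_zero, restrictToSubtorus_eq_zero_iff, restrictToSubtorus_eq_zero_iff] at hfg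
  exact hfg.resolve_left (fun hfH => hfx (hfH x hx)) y hy

theorem isPreconnected_iff_isTorsionFree_quotient {H : Submonoid (ι → Rˣ)} :
    IsPreconnected (H : Set (ι → Rˣ)) ↔
      Module.IsTorsionFree ℤ ((ι → ℤ) ⧸ characterLattice (H : Set (ι → Rˣ))) :=
  ⟨fun hconn => isTorsionFree_quotient_iff.mpr fun _ _ hk hkv =>
    mem_characterLattice_of_zsmul_mem hconn H.one_mem hk hkv,
    fun htf => (isPreirreducible_of_isTorsionFree_quotient htf).isPreconnected⟩

theorem algebraic_subgroup_lattice_general {ι R : Type*} [Fintype ι] [CommRing R] [IsDomain R]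
    (H : Submonoid (ι → Rˣ)) (hH : IsClosed (H : Set (ι → Rˣ))) :
    ∃ (r : ℕ) (a : Fin r → ι → ℤ), LinearIndependent ℤ a ∧
      (H : Set (ι → Rˣ)) = {x | ∀ j, ∏ i, x i ^ a j i = 1} ∧
      (IsPreconnected (H : Set (ι → Rˣ)) ↔
        Module.IsTorsionFree ℤ ((ι → ℤ) ⧸ Submodule.span ℤ (Set.range a))) := by
  obtain ⟨r, a, hind, hspan⟩ :=
    exists_linearIndependent_span_range_eq (characterLattice (H : Set (ι → Rˣ)))
  refine ⟨r, a, hind, Set.ext fun x => ?_, hspan ▸ isPreconnected_iff_isTorsionFree_quotient⟩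
  calc x ∈ H ↔ x ∈ subtorus (Submodule.span ℤ (Set.range a)) := by
        rw [hspan, ← Subgroup.mem_toSubmonoid, subtorus_characterLattice hH]
    _ ↔ ∀ j, ∏ i, x i ^ a j i = 1 := mem_subtorus_span.trans Set.forall_mem_range

lemma zClosed_iff_isClosed {n : ℕ} {S : Set (TorusPt n)} : ZClosed S ↔ IsClosed S :=
  isClosed_iff_exists_eq_zeroLocus.symm

lemma zConnected_iff_isPreconnected {n : ℕ} {S : Set (TorusPt n)} :
    ZConnected S ↔ IsPreconnected S := by
  simp only [ZConnected, isPreconnected_iff_subset_of_disjoint_closed, zClosed_iff_isClosed,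
    Set.inter_assoc]

lemma latSat_iff_isTorsionFree_quotient {n : ℕ} {L : Submodule ℤ (Fin n → ℤ)} :
    LatSat L ↔ Module.IsTorsionFree ℤ ((Fin n → ℤ) ⧸ L) :=
  forall_comm.trans isTorsionFree_quotient_iff.symm

end Zariski

/-- Every algebraic subgroup of `G_m^n` is cut out by a free
lattice of characters, and it is connected iff the lattice is primitive. -/
theorem algebraic_subgroup_lattice
    (n : ℕ) (H : Set (TorusPt n)) (hH : IsAlgSubgroup H) :
    ∃ (r : ℕ) (a : Fin r → Fin n → ℤ), LinearIndependent ℤ a ∧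
      H = {x : TorusPt n | ∀ j, ∏ i, x i ^ a j i = 1} ∧
      (ZConnected H ↔ LatSat (Submodule.span ℤ (Set.range a))) := by
  simp only [zConnected_iff_isPreconnected, latSat_iff_isTorsionFree_quotient]
  exact algebraic_subgroup_lattice_general
    ⟨⟨H, fun hx hy => hH.2.2.1 _ hx _ hy⟩, hH.2.1⟩ (zClosed_iff_isClosed.mp hH.1)

end
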